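/- Fix g ≥ 1 and suppose c, c' > 0 are constants such that for every Minkowski reduced β ∈ 𝔐_g and every x ∈ ℝ^g, c·∑_{i=1}^g β_{i,i} x_i² ≤ ᵗxβx ≤ c'·∑_{i=1}^g β_{i,i} x_i². Then for all real m, d > 0 there exist a positive integer k, a matrix β* in the topological interior of 𝔐̄_g in Sym(g,ℝ), and a constant B > 0 such that for every z ∈ ℂ^g and τ ∈ Sym(g,ℂ) with (Im z, Im τ + β*) ∈ C_m and (Im τ)_{1,1} > d, the following hold: (a) Im τ is positive definite (so τ ∈ ℋ_g); and (b) the series defining ϑ(z, 2τ) converges absolutely and |exp(2πik·τ_{g,g})·ϑ(z, 2τ)| ≤ B. -/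

import Mathlib

open Matrix

/-- Condition M(II) of Minkowski reduction: `ᵗaβa ≥ β_{k,k}` for all `k` and all integer
vectors `a` with `gcd(a_k,…,a_g) = 1`. -/
def MinkII {g : ℕ} (β : Matrix (Fin g) (Fin g) ℝ) : Prop :=
  ∀ k : Fin g, ∀ a : Fin g → ℤ,
    Finset.gcd (Finset.univ.filter fun i => k ≤ i) a = 1 →
      β k k ≤ (fun i => (a i : ℝ)) ⬝ᵥ β.mulVec (fun i => (a i : ℝ))

/-- Condition M(III) of Minkowski reduction: `β_{k,k+1} ≥ 0`. -/
def MinkIII {g : ℕ} (β : Matrix (Fin g) (Fin g) ℝ) : Prop :=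
  ∀ k k' : Fin g, (k' : ℕ) = (k : ℕ) + 1 → 0 ≤ β k k'

/-- The set `𝔐_g` of Minkowski reduced symmetric matrices. -/
def MinkReduced {g : ℕ} (β : Matrix (Fin g) (Fin g) ℝ) : Prop :=
  β.IsSymm ∧ (∀ i : Fin g, (i : ℕ) = 0 → 0 < β i i) ∧ MinkII β ∧ MinkIII β

/-- The closed Minkowski cone `𝔐̄_g`: as `𝔐_g`, but with (I) weakened to `β_{1,1} ≥ 0`. -/
def MinkClosed {g : ℕ} (β : Matrix (Fin g) (Fin g) ℝ) : Prop :=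
  β.IsSymm ∧ (∀ i : Fin g, (i : ℕ) = 0 → 0 ≤ β i i) ∧ MinkII β ∧ MinkIII β

/-- The cone `C_m = {(y,β) : β ∈ 𝔐̄_g, |y_i| ≤ m β_{i,i}}`. -/
def CmSet (g : ℕ) (m : ℝ) : Set ((Fin g → ℝ) × Matrix (Fin g) (Fin g) ℝ) :=
  {p | MinkClosed p.2 ∧ ∀ i, |p.1 i| ≤ m * p.2 i i}

/-- The general term of the Riemann theta series `ϑ(z,τ) = ∑_{n∈ℤ^g} exp(πi(ᵗnτn + 2ᵗnz))`. -/
noncomputable def thetaTerm {g : ℕ} (z : Fin g → ℂ) (τ : Matrix (Fin g) (Fin g) ℂ)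
    (n : Fin g → ℤ) : ℂ :=
  Complex.exp (Real.pi * Complex.I *
    ((fun i => (n i : ℂ)) ⬝ᵥ τ.mulVec (fun i => (n i : ℂ)) +
      2 * ((fun i => (n i : ℂ)) ⬝ᵥ z)))

/-- The Riemann theta function. -/
noncomputable def RiemannTheta {g : ℕ} (z : Fin g → ℂ) (τ : Matrix (Fin g) (Fin g) ℂ) : ℂ :=
  ∑' n : Fin g → ℤ, thetaTerm z τ n

/-!
Add to `Im τ` a point `β*` of the interior of the reduced cone whose quadratic form is at most
`(c d / 2) ∑ xᵢ²`. The diagonal of the reduced matrix `β = Im τ + β*` is nondecreasing and starts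
above `d`, so the lower bound `ᵗxβx ≥ c ∑ β_{i,i} xᵢ²` loses at most half of its strength when `β*`
is subtracted again: `ᵗx (Im τ) x ≥ (c / 2) ∑ β_{i,i} xᵢ²`. Hence `Im τ` is positive definite. In
the theta series half of this bound absorbs the linear term `∑ nᵢ Im zᵢ`, by completing squares, at
the price of a constant `(m² / c) ∑ β_{i,i} ≤ k β_{g,g}`; the other half leaves a Gaussian series
independent of `(z, τ)`. Finally `|exp (2πik τ_{g,g})|` cancels `exp (2πk β_{g,g})` up to the factor
`exp (2πk β*_{g,g})`.

An interior point is a diagonal matrix with positive, well separated increasing entries, perturbed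
by a small positive constant: the only integer vectors admitted by M(II) on which its form does not
exceed `β_{k,k}` by a definite gap are `± e_k`, where there is equality identically in `β`.
-/

section QuadraticForms

lemma abs_diagonal_add_le {ι R : Type*} [AddCommGroup R] [LinearOrder R] [IsOrderedAddMonoid R]
    [DecidableEq ι] {w : ι → R} {M η : R} (hw₀ : ∀ i, 0 ≤ w i) (hw : ∀ i, w i ≤ M) (hM : 0 ≤ M)
    (hη : 0 ≤ η) (i j : ι) : |diagonal w i j + η| ≤ M + η := by
  rcases eq_or_ne i j with rfl | hij
  · rw [diagonal_apply_eq, abs_of_nonneg (add_nonneg (hw₀ i) hη)]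
    exact add_le_add_left (hw i) η
  · rw [diagonal_apply_ne w hij, zero_add, abs_of_nonneg hη]
    exact le_add_of_nonneg_left hM

variable {ι R : Type*} [Fintype ι]

lemma abs_dotProduct_mulVec_le [CommRing R] [LinearOrder R] [IsStrictOrderedRing R]
    {E : Matrix ι ι R} {δ : R} (hE : ∀ i j, |E i j| ≤ δ) (x : ι → R) :
    |x ⬝ᵥ E *ᵥ x| ≤ Fintype.card ι * δ * ∑ i, x i ^ 2 := by
  rcases isEmpty_or_nonempty ι with _ | ⟨⟨i₀⟩⟩
  · simp
  have hδ : 0 ≤ δ := (abs_nonneg _).trans (hE i₀ i₀)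
  calc |x ⬝ᵥ E *ᵥ x|
      = |∑ i, ∑ j, x i * (E i j * x j)| := by simp only [dotProduct, mulVec, Finset.mul_sum]
    _ ≤ ∑ i, ∑ j, |x i * (E i j * x j)| :=
        (Finset.abs_sum_le_sum_abs _ _).trans
          (Finset.sum_le_sum fun i _ => Finset.abs_sum_le_sum_abs _ _)
    _ ≤ ∑ i, ∑ j, |x i| * (δ * |x j|) := by
        gcongr with i _ j _
        rw [abs_mul, abs_mul]
        gcongr
        exact hE i j
    _ = δ * (∑ i, |x i|) ^ 2 := by
        rw [sq, Finset.sum_mul_sum]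
        simp only [Finset.mul_sum, mul_left_comm δ]
    _ ≤ δ * (Fintype.card ι * ∑ i, |x i| ^ 2) :=
        mul_le_mul_of_nonneg_left sq_sum_le_card_mul_sum_sq hδ
    _ = Fintype.card ι * δ * ∑ i, x i ^ 2 := by simp only [sq_abs]; ring

lemma dotProduct_diagonal_mulVec_self [CommSemiring R] [DecidableEq ι] (w x : ι → R) :
    x ⬝ᵥ diagonal w *ᵥ x = ∑ i, w i * x i ^ 2 :=
  Finset.sum_congr rfl fun i _ => by rw [mulVec_diagonal]; ring

lemma posDef_of_mul_sum_mul_sq_le {Y : Matrix ι ι ℝ} {b : ι → ℝ} {κ : ℝ} (hY : Y.IsSymm)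
    (hκ : 0 < κ) (hb : ∀ i, 0 < b i)
    (h : ∀ x : ι → ℝ, κ * ∑ i, b i * x i ^ 2 ≤ x ⬝ᵥ Y *ᵥ x) : Y.PosDef := by
  classical
  have hsub : (Y - κ • diagonal b).PosSemidef := by
    refine .of_dotProduct_mulVec_nonneg
      (isHermitian_iff_isSymm.2 (hY.sub ((isSymm_diagonal b).smul κ))) fun x => ?_
    rw [star_trivial, sub_mulVec, dotProduct_sub, smul_mulVec, dotProduct_smul,
      dotProduct_diagonal_mulVec_self]
    exact sub_nonneg.2 (h x)
  simpa using ((PosDef.diagonal hb).smul hκ).add_posSemidef hsub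

lemma half_mul_sum_diag_le_of_le_add {Y β₀ : Matrix ι ι ℝ} {c d : ℝ} (hc : 0 ≤ c) {x : ι → ℝ}
    (hd : ∀ i, d ≤ (Y + β₀) i i)
    (hlow : c * ∑ i, (Y + β₀) i i * x i ^ 2 ≤ x ⬝ᵥ (Y + β₀) *ᵥ x)
    (hβ₀ : x ⬝ᵥ β₀ *ᵥ x ≤ c * d / 2 * ∑ i, x i ^ 2) :
    c / 2 * ∑ i, (Y + β₀) i i * x i ^ 2 ≤ x ⬝ᵥ Y *ᵥ x := by
  have hdiag : c * d / 2 * ∑ i, x i ^ 2 ≤ c / 2 * ∑ i, (Y + β₀) i i * x i ^ 2 := by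
    calc c * d / 2 * ∑ i, x i ^ 2 = c / 2 * ∑ i, d * x i ^ 2 := by rw [← Finset.mul_sum]; ring
      _ ≤ _ := by gcongr with i; exact hd i
  rw [add_mulVec, dotProduct_add] at hlow
  linarith

end QuadraticForms

section IntegerVectors

lemma exists_gt_ne_zero_or_isUnit_of_gcd_eq_one {ι R : Type*} [Fintype ι] [LinearOrder ι]
    [CommMonoidWithZero R] [NormalizedGCDMonoid R] {k : ι} {a : ι → R}
    (ha : (Finset.univ.filter fun i => k ≤ i).gcd a = 1) :
    (∃ j, k < j ∧ a j ≠ 0) ∨ IsUnit (a k) := by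
  refine or_iff_not_imp_left.2 fun hzero => isUnit_of_dvd_one ?_
  push Not at hzero
  rw [← ha]
  refine Finset.dvd_gcd fun j hj => ?_
  rcases (Finset.mem_filter.1 hj).2.eq_or_lt with rfl | hkj
  · rfl
  · rw [hzero j hkj]
    exact dvd_zero _

variable {ι : Type*} [Fintype ι] [LinearOrder ι] {k : ι} {a : ι → ℤ}

lemma eq_single_or_add_le_sum_mul_sq {w : ι → ℝ} {s : ℝ} (hs : 0 ≤ s) (hw : ∀ i, s ≤ w i)
    (hgap : ∀ i j, i < j → w i + s ≤ w j) (ha : (Finset.univ.filter fun i => k ≤ i).gcd a = 1) :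
    (IsUnit (a k) ∧ a = Pi.single k (a k)) ∨ w k + s ≤ ∑ i, w i * (a i : ℝ) ^ 2 := by
  have hnonneg (i : ι) : 0 ≤ w i * (a i : ℝ) ^ 2 := mul_nonneg (hs.trans (hw i)) (sq_nonneg _)
  have hle {i : ι} (hi : a i ≠ 0) : w i ≤ w i * (a i : ℝ) ^ 2 :=
    le_mul_of_one_le_right (hs.trans (hw i))
      (by exact_mod_cast (one_le_sq_iff_one_le_abs (a i)).2 (Int.one_le_abs hi))
  rcases exists_gt_ne_zero_or_isUnit_of_gcd_eq_one ha with ⟨j, hkj, hj⟩ | hunit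
  · right
    calc w k + s ≤ w j := hgap k j hkj
      _ ≤ w j * (a j : ℝ) ^ 2 := hle hj
      _ ≤ _ := Finset.single_le_sum (fun i _ => hnonneg i) (Finset.mem_univ j)
  · by_cases hsupp : ∃ i, i ≠ k ∧ a i ≠ 0
    · obtain ⟨i, hik, hi⟩ := hsupp
      right
      calc w k + s ≤ w k * (a k : ℝ) ^ 2 + w i * (a i : ℝ) ^ 2 :=
            add_le_add (hle hunit.ne_zero) ((hw i).trans (hle hi))
        _ = ∑ l ∈ {k, i}, w l * (a l : ℝ) ^ 2 := by rw [Finset.sum_pair hik.symm]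
        _ ≤ _ := Finset.sum_le_sum_of_subset_of_nonneg (Finset.subset_univ _)
            fun l _ _ => hnonneg l
    · push Not at hsupp
      exact .inl ⟨hunit, funext fun i => by by_cases h : i = k <;> simp [h, hsupp]⟩

end IntegerVectors

section MinkowskiCone

variable {g : ℕ} {β : Matrix (Fin g) (Fin g) ℝ} {w : Fin g → ℝ} {s δ η : ℝ}

lemma MinkII.monotone_diag (h : MinkII β) : Monotone β.diag := by
  intro i j hij
  have hgcd : (Finset.univ.filter fun l => i ≤ l).gcd (Pi.single j (1 : ℤ)) = 1 := by
    rw [← Finset.normalize_gcd, normalize_eq_one]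
    refine isUnit_of_dvd_one ?_
    simpa using Finset.gcd_dvd (f := Pi.single j (1 : ℤ)) (b := j)
      (Finset.mem_filter.2 ⟨Finset.mem_univ j, hij⟩)
  have hcast : (fun l => ((Pi.single j 1 : Fin g → ℤ) l : ℝ)) = Pi.single j 1 := by
    ext l
    simp [Pi.single_apply]
  simpa [hcast] using h i _ hgcd

/- Subtracting the worst-case error `g δ` from every weight gives a diagonal minorant of `β` whose
gap `s - g δ` still dominates `β k k - (w k - g δ) ≤ (g + 1) δ`. -/
lemma minkII_of_abs_sub_diagonal_le (hw : ∀ i, s ≤ w i) (hgap : ∀ i j, i < j → w i + s ≤ w j)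
    (hδ : (2 * g + 1) * δ ≤ s) (hβ : ∀ i j, |β i j - diagonal w i j| ≤ δ) : MinkII β := by
  intro k a ha
  set x : Fin g → ℝ := fun i => a i
  have hδ₀ : 0 ≤ δ := (abs_nonneg _).trans (hβ k k)
  have hgδ : 0 ≤ g * δ := by positivity
  rcases eq_single_or_add_le_sum_mul_sq (w := fun i => w i - g * δ) (s := s - g * δ)
      (by linarith) (fun i => by linarith [hw i]) (fun i j hij => by linarith [hgap i j hij]) ha
    with ⟨hunit, hsingle⟩ | hsum
  · have hx : x = Pi.single k (a k : ℝ) := by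
      ext i
      simp only [x]
      rw [hsingle]
      by_cases h : i = k <;> simp [h]
    have hsq : (a k : ℝ) * a k = 1 := by exact_mod_cast Int.isUnit_mul_self hunit
    have hform : x ⬝ᵥ β *ᵥ x = a k * a k * β k k := by
      rw [hx, mulVec_single, single_dotProduct]
      simp only [Pi.smul_apply, col_apply, MulOpposite.smul_eq_mul_unop, MulOpposite.unop_op]
      ring
    exact (hform.trans (by rw [hsq, one_mul])).ge
  · have hform : ∑ i, (w i - g * δ) * x i ^ 2 ≤ x ⬝ᵥ β *ᵥ x := by
      have herr := (abs_le.1 (abs_dotProduct_mulVec_le (E := β - diagonal w) hβ x)).1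
      rw [sub_mulVec, dotProduct_sub, dotProduct_diagonal_mulVec_self, Fintype.card_fin] at herr
      simp only [sub_mul, Finset.sum_sub_distrib, ← Finset.mul_sum]
      linarith
    have hkk : β k k ≤ w k + δ := by
      have := (abs_le.1 (hβ k k)).2
      rw [diagonal_apply_eq] at this
      linarith
    linarith

lemma minkClosed_of_abs_sub_lt (hw : ∀ i, s ≤ w i) (hgap : ∀ i j, i < j → w i + s ≤ w j)
    (hη : (2 * g + 1) * (2 * η) ≤ s) (hsymm : β.IsSymm)
    (hβ : ∀ i j, |β i j - (diagonal w i j + η)| < η) : MinkClosed β := by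
  have hlb (i j : Fin g) : diagonal w i j < β i j := by linarith [(abs_lt.1 (hβ i j)).1]
  refine ⟨hsymm, fun i _ => ?_, minkII_of_abs_sub_diagonal_le hw hgap hη fun i j => ?_,
    fun k k' hk => ?_⟩
  · have hη₀ : 0 < η := (abs_nonneg _).trans_lt (hβ i i)
    have hs : 0 ≤ s := le_trans (by positivity) hη
    have := hlb i i
    rw [diagonal_apply_eq] at this
    linarith [hw i]
  · rw [abs_of_pos (sub_pos.2 (hlb i j))]
    linarith [(abs_lt.1 (hβ i j)).2]
  · have hne : k ≠ k' := by
      rintro rfl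
      omega
    simpa [hne] using (hlb k k').le

lemma mem_interior_minkClosed_of_apply_eq (hw : ∀ i, s ≤ w i)
    (hgap : ∀ i j, i < j → w i + s ≤ w j) (hη₀ : 0 < η) (hη : (2 * g + 1) * (2 * η) ≤ s)
    (β₀ : {β : Matrix (Fin g) (Fin g) ℝ // β.IsSymm})
    (hβ₀ : ∀ i j, β₀.val i j = diagonal w i j + η) :
    β₀ ∈ interior {β : {β : Matrix (Fin g) (Fin g) ℝ // β.IsSymm} | MinkClosed β.val} := by
  rw [mem_interior_iff_mem_nhds]
  have hnear : ∀ᶠ β in nhds β₀, ∀ i j, |β.val i j - β₀.val i j| < η :=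
    Filter.eventually_all.2 fun i => Filter.eventually_all.2 fun j =>
      ((continuous_subtype_val.matrix_elem i j).tendsto β₀).eventually
        (eventually_abs_sub_lt _ hη₀)
  filter_upwards [hnear] with β hβ
  exact minkClosed_of_abs_sub_lt hw hgap hη β.2 fun i j => hβ₀ i j ▸ hβ i j

lemma exists_mem_interior_minkClosed_dotProduct_mulVec_le (g : ℕ) {ε : ℝ} (hε : 0 < ε) :
    ∃ β ∈ interior {β : {β : Matrix (Fin g) (Fin g) ℝ // β.IsSymm} | MinkClosed β.val},
      ∀ x : Fin g → ℝ, x ⬝ᵥ β.val *ᵥ x ≤ ε * ∑ i, x i ^ 2 := by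
  set s : ℝ := ε / (g * (g + 1) + 1) with hs
  set η : ℝ := s / (2 * (2 * g + 1)) with hη
  have hs₀ : 0 < s := by positivity
  have hη₀ : 0 < η := by positivity
  have hηs : (2 * g + 1) * (2 * η) = s := by rw [hη]; field_simp
  have hgη : 0 ≤ g * η := by positivity
  set w : Fin g → ℝ := fun i => s * ((i : ℕ) + 1) with hw
  have hle (i : Fin g) : s ≤ w i := le_mul_of_one_le_right hs₀.le (by simp)
  have hgap (i j : Fin g) (hij : i < j) : w i + s ≤ w j := by
    have : ((i : ℕ) : ℝ) + 1 ≤ (j : ℕ) := by exact_mod_cast hij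
    calc w i + s = s * ((i : ℕ) + 1 + 1) := by simp only [hw]; ring
      _ ≤ w j := by simp only [hw]; gcongr
  have hwg (i : Fin g) : w i ≤ s * g := by
    have : ((i : ℕ) : ℝ) + 1 ≤ g := by exact_mod_cast i.2
    simp only [hw]
    gcongr
  refine ⟨⟨diagonal w + of fun _ _ => η, (isSymm_diagonal w).add rfl⟩,
    mem_interior_minkClosed_of_apply_eq hle hgap hη₀ hηs.le _ fun _ _ => rfl, fun x => ?_⟩
  calc x ⬝ᵥ (diagonal w + of fun _ _ => η) *ᵥ x
      ≤ g * (s * g + η) * ∑ i, x i ^ 2 := by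
        simpa using (abs_le.1 (abs_dotProduct_mulVec_le (E := diagonal w + of fun _ _ => η)
          (abs_diagonal_add_le (fun i => hs₀.le.trans (hle i)) hwg (by positivity) hη₀.le) x)).2
    _ ≤ g * (s * g + s) * ∑ i, x i ^ 2 := by
        gcongr
        linarith
    _ ≤ ε * ∑ i, x i ^ 2 := by
        gcongr
        have : s * (g * (g + 1) + 1) = ε := by rw [hs]; field_simp
        linarith

end MinkowskiCone

section Summability

lemma summable_prod_apply {ι : Type*} [Fintype ι] {α : ι → Type*} {f : ∀ i, α i → ℝ}
    (hf₀ : ∀ i a, 0 ≤ f i a) (hf : ∀ i, Summable (f i)) :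
    Summable fun x : ∀ i, α i => ∏ i, f i (x i) := by
  classical
  refine summable_of_sum_le (c := ∏ i, ∑' a, f i a)
    (fun x => Finset.prod_nonneg fun i _ => hf₀ i _) fun u => ?_
  have hsub : u ⊆ Fintype.piFinset fun i => u.image fun x => x i := fun x hx =>
    Fintype.mem_piFinset.2 fun i => Finset.mem_image_of_mem _ hx
  calc ∑ x ∈ u, ∏ i, f i (x i)
      ≤ ∑ x ∈ Fintype.piFinset fun i => u.image fun x => x i, ∏ i, f i (x i) :=
        Finset.sum_le_sum_of_subset_of_nonneg hsub fun x _ _ =>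
          Finset.prod_nonneg fun i _ => hf₀ i _
    _ = ∏ i, ∑ a ∈ u.image fun x => x i, f i a := (Finset.prod_univ_sum _ _).symm
    _ ≤ ∏ i, ∑' a, f i a :=
        Finset.prod_le_prod (fun i _ => Finset.sum_nonneg fun a _ => hf₀ i a)
          fun i _ => (hf i).sum_le_tsum _ fun a _ => hf₀ i a

lemma summable_exp_neg_mul_sum_sq (ι : Type*) [Fintype ι] {a : ℝ} (ha : 0 < a) :
    Summable fun n : ι → ℤ => Real.exp (-a * ∑ i, (n i : ℝ) ^ 2) := by
  have hone : Summable fun n : ℤ => Real.exp (-a * (n : ℝ) ^ 2) := by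
    refine (summable_pow_mul_jacobiTheta₂_term_bound 0 (div_pos ha Real.pi_pos) 0).congr
      fun n => ?_
    simp only [pow_zero, one_mul]
    congr 1
    field_simp
    ring
  simpa only [Finset.mul_sum, Real.exp_sum] using
    summable_prod_apply (fun _ (n : ℤ) => (Real.exp_pos (-a * (n : ℝ) ^ 2)).le) fun _ : ι => hone

end Summability

section Theta

lemma mul_sq_sub_le_mul_sq_add_mul {b c d m x y : ℝ} (hc : 0 < c) (hd : 0 ≤ d) (hdb : d ≤ b)
    (hy : |y| ≤ m * b) :
    c * d / 4 * x ^ 2 - m ^ 2 / c * b ≤ c / 2 * (b * x ^ 2) + x * y := by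
  have hxy : -(|x| * (m * b)) ≤ x * y := by
    calc -(|x| * (m * b)) ≤ -(|x| * |y|) := by gcongr
      _ = -|x * y| := by rw [abs_mul]
      _ ≤ x * y := neg_abs_le _
  have hsquare : 0 ≤ b / c * (c * |x| / 2 - m) ^ 2 := by
    have := hd.trans hdb
    positivity
  have hexpand : b / c * (c * |x| / 2 - m) ^ 2 =
      c / 4 * (b * x ^ 2) - |x| * (m * b) + m ^ 2 / c * b := by
    rw [← sq_abs x]
    field_simp
    ring
  have hdb' : c * d / 4 * x ^ 2 ≤ c / 4 * (b * x ^ 2) := by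
    calc c * d / 4 * x ^ 2 = c / 4 * (d * x ^ 2) := by ring
      _ ≤ _ := by gcongr
  linarith

variable {g : ℕ} (z : Fin g → ℂ) (τ : Matrix (Fin g) (Fin g) ℂ)

lemma norm_thetaTerm (n : Fin g → ℤ) :
    ‖thetaTerm z τ n‖ = Real.exp (-Real.pi *
      ((fun i => (n i : ℝ)) ⬝ᵥ τ.map Complex.im *ᵥ (fun i => (n i : ℝ)) +
        2 * ∑ i, (n i : ℝ) * (z i).im)) := by
  have hquad : ((fun i => (n i : ℂ)) ⬝ᵥ τ *ᵥ (fun i => (n i : ℂ))).im =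
      (fun i => (n i : ℝ)) ⬝ᵥ τ.map Complex.im *ᵥ (fun i => (n i : ℝ)) := by
    simp [dotProduct, mulVec, Complex.im_sum, Complex.re_sum]
  have hlin : ((fun i => (n i : ℂ)) ⬝ᵥ z).im = ∑ i, (n i : ℝ) * (z i).im := by
    simp [dotProduct, Complex.im_sum]
  rw [thetaTerm, Complex.norm_exp, mul_assoc, Complex.re_ofReal_mul, Complex.I_mul_re,
    Complex.add_im, hquad, ← hlin, neg_mul, mul_neg]
  simp

variable {z τ} {b : Fin g → ℝ} {c d m : ℝ}

lemma norm_thetaTerm_two_smul_le (hc : 0 < c) (hd : 0 ≤ d) (hdb : ∀ i, d ≤ b i)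
    (hz : ∀ i, |(z i).im| ≤ m * b i)
    (hτ : ∀ x : Fin g → ℝ, c / 2 * ∑ i, b i * x i ^ 2 ≤ x ⬝ᵥ τ.map Complex.im *ᵥ x)
    (n : Fin g → ℤ) :
    ‖thetaTerm z ((2 : ℂ) • τ) n‖ ≤ Real.exp (2 * Real.pi * (m ^ 2 / c * ∑ i, b i)) *
      Real.exp (-(Real.pi * c * d / 2) * ∑ i, (n i : ℝ) ^ 2) := by
  have him : ((2 : ℂ) • τ).map Complex.im = (2 : ℝ) • τ.map Complex.im := by
    ext i j
    simp
  have hexponent : c * d / 4 * ∑ i, (n i : ℝ) ^ 2 - m ^ 2 / c * ∑ i, b i ≤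
      (fun i => (n i : ℝ)) ⬝ᵥ τ.map Complex.im *ᵥ (fun i => (n i : ℝ)) +
        ∑ i, (n i : ℝ) * (z i).im := by
    calc _ = ∑ i, (c * d / 4 * (n i : ℝ) ^ 2 - m ^ 2 / c * b i) := by
          rw [Finset.sum_sub_distrib, Finset.mul_sum, Finset.mul_sum]
      _ ≤ ∑ i, (c / 2 * (b i * (n i : ℝ) ^ 2) + n i * (z i).im) :=
          Finset.sum_le_sum fun i _ => mul_sq_sub_le_mul_sq_add_mul hc hd (hdb i) (hz i)
      _ = c / 2 * ∑ i, b i * (n i : ℝ) ^ 2 + ∑ i, (n i : ℝ) * (z i).im := by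
          rw [Finset.sum_add_distrib, Finset.mul_sum]
      _ ≤ _ := by gcongr; exact hτ _
  rw [norm_thetaTerm, him, smul_mulVec, dotProduct_smul, smul_eq_mul, ← Real.exp_add,
    Real.exp_le_exp]
  linarith [mul_le_mul_of_nonneg_left hexponent Real.two_pi_pos.le]

lemma norm_riemannTheta_le_mul_tsum {C : ℝ} {u : (Fin g → ℤ) → ℝ} (hu : Summable u)
    (h : ∀ n, ‖thetaTerm z τ n‖ ≤ C * u n) : ‖RiemannTheta z τ‖ ≤ C * ∑' n, u n :=
  tsum_of_norm_bounded (hu.hasSum.mul_left C) h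

lemma norm_exp_two_pi_I_mul_mul_le {k : ℕ} {w θ : ℂ} {y T S : ℝ} (hS : 0 ≤ S)
    (hθ : ‖θ‖ ≤ Real.exp (2 * Real.pi * T) * S) (hT : T ≤ k * (w.im + y)) :
    ‖Complex.exp (2 * Real.pi * Complex.I * k * w) * θ‖ ≤ Real.exp (2 * Real.pi * k * y) * S := by
  have hre : (2 * Real.pi * Complex.I * k * w).re = -(2 * Real.pi * k * w.im) := by
    simp
  rw [norm_mul, Complex.norm_exp, hre]
  calc Real.exp (-(2 * Real.pi * k * w.im)) * ‖θ‖
      ≤ Real.exp (-(2 * Real.pi * k * w.im)) * (Real.exp (2 * Real.pi * (k * (w.im + y))) * S) := by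
        refine mul_le_mul_of_nonneg_left (hθ.trans ?_) (Real.exp_pos _).le
        gcongr
    _ = Real.exp (2 * Real.pi * k * y) * S := by
        rw [← mul_assoc, ← Real.exp_add]
        ring_nf

end Theta

theorem stmt_4_general (g : ℕ) (hg : 1 ≤ g) (c : ℝ) (hc : 0 < c)
    (hlow : ∀ β : Matrix (Fin g) (Fin g) ℝ, MinkReduced β → ∀ x : Fin g → ℝ,
      c * ∑ i, β i i * x i ^ 2 ≤ x ⬝ᵥ β.mulVec x) :
    ∀ m d : ℝ, 0 < d →
      ∃ (k : ℕ) (βstar : Matrix (Fin g) (Fin g) ℝ) (hsym : βstar.IsSymm) (B : ℝ),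
        0 < k ∧ 0 < B ∧
        (⟨βstar, hsym⟩ : {β : Matrix (Fin g) (Fin g) ℝ // β.IsSymm}) ∈
          interior {β : {β : Matrix (Fin g) (Fin g) ℝ // β.IsSymm} | MinkClosed β.val} ∧
        ∀ (z : Fin g → ℂ) (τ : Matrix (Fin g) (Fin g) ℂ), τ.IsSymm →
          ((fun i => (z i).im), (Matrix.of fun i j => (τ i j).im) + βstar) ∈ CmSet g m →
          d < (τ ⟨0, hg⟩ ⟨0, hg⟩).im →
          (Matrix.of fun i j => (τ i j).im).PosDef ∧
          Summable (fun n : Fin g → ℤ => ‖thetaTerm z ((2 : ℂ) • τ) n‖) ∧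
          ‖Complex.exp (2 * Real.pi * Complex.I * (k : ℂ) *
              τ ⟨g - 1, Nat.sub_one_lt_of_lt hg⟩ ⟨g - 1, Nat.sub_one_lt_of_lt hg⟩) *
            RiemannTheta z ((2 : ℂ) • τ)‖ ≤ B := by
  intro m d hd
  obtain ⟨⟨βs, hsymm⟩, hint, hform⟩ :=
    exists_mem_interior_minkClosed_dotProduct_mulVec_le g (show 0 < c * d / 2 by positivity)
  obtain ⟨k, hk⟩ := exists_nat_gt (m ^ 2 / c * g)
  have hk₀ : 0 < k := by exact_mod_cast (show 0 ≤ m ^ 2 / c * g by positivity).trans_lt hk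
  have hgauss := summable_exp_neg_mul_sum_sq (Fin g) (show 0 < Real.pi * c * d / 2 by positivity)
  have hgauss₀ := hgauss.tsum_pos (fun _ => (Real.exp_pos _).le) 0 (Real.exp_pos _)
  set L : Fin g := ⟨g - 1, Nat.sub_one_lt_of_lt hg⟩
  refine ⟨k, βs, hsymm, _, hk₀, mul_pos (Real.exp_pos (2 * Real.pi * k * βs L L)) hgauss₀, hint, ?_⟩
  rintro z τ hτ ⟨hβ, hy⟩ hτ₀
  set β := τ.map Complex.im + βs
  have hmono : Monotone β.diag := hβ.2.2.1.monotone_diag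
  have hβ₀ : d < β ⟨0, hg⟩ ⟨0, hg⟩ := lt_add_of_lt_of_nonneg hτ₀ ((interior_subset hint).2.1 _ rfl)
  have hdβ (i : Fin g) : d ≤ β i i := hβ₀.le.trans (hmono (Nat.zero_le i))
  have hβL (i : Fin g) : β i i ≤ β L L := hmono (Nat.le_sub_one_of_lt i.2)
  have hred : MinkReduced β := ⟨hβ.1, fun i _ => hd.trans_le (hdβ i), hβ.2.2⟩
  have hY (x : Fin g → ℝ) : c / 2 * ∑ i, β i i * x i ^ 2 ≤ x ⬝ᵥ τ.map Complex.im *ᵥ x :=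
    half_mul_sum_diag_le_of_le_add hc.le hdβ (hlow β hred x) (hform x)
  have hterm := norm_thetaTerm_two_smul_le hc hd.le hdβ hy hY
  have htrace : m ^ 2 / c * ∑ i, β i i ≤ k * β L L := by
    calc m ^ 2 / c * ∑ i, β i i ≤ m ^ 2 / c * (g * β L L) := by
          gcongr
          simpa using Finset.sum_le_card_nsmul Finset.univ _ _ fun i _ => hβL i
      _ = m ^ 2 / c * g * β L L := by ring
      _ ≤ k * β L L := mul_le_mul_of_nonneg_right hk.le (hd.le.trans (hdβ L))
  exact ⟨posDef_of_mul_sum_mul_sq_le (hτ.map _) (half_pos hc) (fun i => hd.trans_le (hdβ i)) hY,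
    .of_nonneg_of_le (fun _ => norm_nonneg _) hterm (hgauss.mul_left _),
    norm_exp_two_pi_I_mul_mul_le hgauss₀.le (norm_riemannTheta_le_mul_tsum hgauss hterm) htrace⟩

/-- given the Minkowski comparison constants `c, c'`, for all `m, d > 0`
there are a positive integer `k`, a symmetric matrix `β*` in the interior of `𝔐̄_g`
(taken inside `Sym(g,ℝ)`), and a bound `B > 0` such that for all `(z,τ)` with
`(Im z, Im τ + β*) ∈ C_m` and `(Im τ)_{1,1} > d`: `Im τ` is positive definite, the series
defining `ϑ(z,2τ)` converges absolutely, and `|exp(2πik τ_{g,g}) ϑ(z,2τ)| ≤ B`. -/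
theorem stmt_4 (g : ℕ) (hg : 1 ≤ g) (c c' : ℝ) (hc : 0 < c) (hc' : 0 < c')
    (hlow : ∀ β : Matrix (Fin g) (Fin g) ℝ, MinkReduced β → ∀ x : Fin g → ℝ,
      c * ∑ i, β i i * x i ^ 2 ≤ x ⬝ᵥ β.mulVec x)
    (hup : ∀ β : Matrix (Fin g) (Fin g) ℝ, MinkReduced β → ∀ x : Fin g → ℝ,
      x ⬝ᵥ β.mulVec x ≤ c' * ∑ i, β i i * x i ^ 2) :
    ∀ m d : ℝ, 0 < m → 0 < d →
      ∃ (k : ℕ) (βstar : Matrix (Fin g) (Fin g) ℝ) (hsym : βstar.IsSymm) (B : ℝ),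
        0 < k ∧ 0 < B ∧
        (⟨βstar, hsym⟩ : {β : Matrix (Fin g) (Fin g) ℝ // β.IsSymm}) ∈
          interior {β : {β : Matrix (Fin g) (Fin g) ℝ // β.IsSymm} | MinkClosed β.val} ∧
        ∀ (z : Fin g → ℂ) (τ : Matrix (Fin g) (Fin g) ℂ), τ.IsSymm →
          ((fun i => (z i).im), (Matrix.of fun i j => (τ i j).im) + βstar) ∈ CmSet g m →
          d < (τ ⟨0, by omega⟩ ⟨0, by omega⟩).im →
          (Matrix.of fun i j => (τ i j).im).PosDef ∧
          Summable (fun n : Fin g → ℤ => ‖thetaTerm z ((2 : ℂ) • τ) n‖) ∧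
          ‖Complex.exp (2 * Real.pi * Complex.I * (k : ℂ) *
              τ ⟨g - 1, by omega⟩ ⟨g - 1, by omega⟩) *
            RiemannTheta z ((2 : ℂ) • τ)‖ ≤ B := by
  intro m d _ hd
  exact stmt_4_general g hg c hc hlow m d hd
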